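/- arXiv:2005.08166 — 2 statements merged into one kernel-verified Lean document; each statement's English description precedes it below -/
import Mathlib

section
/- For integers r, s ≥ 0 with r + s ≥ 1, the first prolongation of so(r,s) is zero, and the first prolongation of co(r,s) equals { Z∧(·) + (Z,·)·id : Z ∈ ℝ^{r,s} }; moreover the map Z ↦ (X ↦ Z∧X + (Z,X)·id) is an injective linear map, so co(r,s)^{(1)} is isomorphic to ℝ^{r,s} as a vector space. -/
open Module

noncomputable section

namespace Weyl

variable {V : Type*} [AddCommGroup V] [Module ℝ V]

/-- The endomorphism `X ∧ Y : Z ↦ B(X,Z)•Y − B(Y,Z)•X`. -/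
def wedge (B : LinearMap.BilinForm ℝ V) (X Y : V) : Module.End ℝ V where
  toFun Z := B X Z • Y - B Y Z • X
  map_add' z z' := by simp only [map_add, add_smul]; abel
  map_smul' c z := by simp only [map_smul, smul_eq_mul, RingHom.id_apply, mul_smul, smul_sub]

/-- The Lie algebra `so(B)` of endomorphisms skew-symmetric with respect to `B`. -/
def soSet (B : LinearMap.BilinForm ℝ V) : Set (Module.End ℝ V) :=
  {A | ∀ x y, B (A x) y + B x (A y) = 0}

/-- The conformal Lie algebra `co(B) = ℝ·id ⊕ so(B)`. -/
def coSet (B : LinearMap.BilinForm ℝ V) : Set (Module.End ℝ V) :=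
  {F | ∃ c : ℝ, ∃ S ∈ soSet B, F = c • (1 : Module.End ℝ V) + S}

/-- The first prolongation `g^{(1)}` of a set of endomorphisms:
linear maps `φ : V → g` with `φ(X)Y = φ(Y)X`. -/
def firstProlong (g : Set (Module.End ℝ V)) : Set (V →ₗ[ℝ] Module.End ℝ V) :=
  {φ | (∀ x, φ x ∈ g) ∧ ∀ x y, φ x y = φ y x}

/-- `R` is an algebraic curvature tensor of type `g` (a linear map on `Λ²V`,
encoded as an antisymmetric bilinear map, with values in `g`, satisfying the
Bianchi identity). -/
def IsCurv (g : Set (Module.End ℝ V)) (R : V →ₗ[ℝ] V →ₗ[ℝ] Module.End ℝ V) : Prop :=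
  (∀ x y, R x y = - R y x) ∧ (∀ x y, R x y ∈ g) ∧
    ∀ x y z, R x y z + R y z x + R z x y = 0

/-- `L(ℛ(g))`: the span of all values of algebraic curvature tensors of type `g`. -/
def curvSpan (g : Set (Module.End ℝ V)) : Submodule ℝ (Module.End ℝ V) :=
  Submodule.span ℝ {F | ∃ R, IsCurv g R ∧ ∃ x y, F = R x y}

/-- `g` is a Berger algebra: `L(ℛ(g)) = g`. -/
def IsBerger (g : Set (Module.End ℝ V)) : Prop :=
  (curvSpan g : Set (Module.End ℝ V)) = g

/-- `g` is (the underlying set of) a Lie subalgebra of `gl(V)`. -/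
def IsLieSub (g : Set (Module.End ℝ V)) : Prop :=
  (0 : Module.End ℝ V) ∈ g ∧ (∀ F ∈ g, ∀ F' ∈ g, F + F' ∈ g) ∧
    (∀ (c : ℝ), ∀ F ∈ g, c • F ∈ g) ∧ ∀ F ∈ g, ∀ F' ∈ g, F * F' - F' * F ∈ g

/-- The subspace `W` is invariant under every element of `g`. -/
def Invariant (g : Set (Module.End ℝ V)) (W : Submodule ℝ V) : Prop :=
  ∀ F ∈ g, ∀ x ∈ W, F x ∈ W

/-- The restriction of `B` to `W` is nondegenerate. -/
def IsNondegOn (B : LinearMap.BilinForm ℝ V) (W : Submodule ℝ V) : Prop :=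
  ∀ x ∈ W, (∀ y ∈ W, B x y = 0) → x = 0

/-- Weak irreducibility: no proper nonzero invariant nondegenerate subspace. -/
def WeaklyIrred (B : LinearMap.BilinForm ℝ V) (g : Set (Module.End ℝ V)) : Prop :=
  ∀ W : Submodule ℝ V, Invariant g W → IsNondegOn B W → W = ⊥ ∨ W = ⊤

/-- Irreducibility: no proper nonzero invariant subspace. -/
def Irred (g : Set (Module.End ℝ V)) : Prop :=
  ∀ W : Submodule ℝ V, Invariant g W → W = ⊥ ∨ W = ⊤

/-- The standard nondegenerate symmetric bilinear form of signature `(r,s)` on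
`ℝ^{r,s} = Fin (r+s) → ℝ` (the first `r` coordinates are timelike). -/
def psForm (r s : ℕ) : LinearMap.BilinForm ℝ (Fin (r + s) → ℝ) :=
  LinearMap.mk₂ ℝ
    (fun x y => ∑ i : Fin (r + s), (if (i : ℕ) < r then (-1 : ℝ) else 1) * (x i * y i))
    (fun x x' y => by
      simp only [Pi.add_apply, add_mul, mul_add, Finset.sum_add_distrib])
    (fun c x y => by
      simp only [Pi.smul_apply, smul_eq_mul, Finset.mul_sum]
      exact Finset.sum_congr rfl fun i _ => by ring)
    (fun x y y' => by
      simp only [Pi.add_apply, add_mul, mul_add, Finset.sum_add_distrib])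
    (fun c x y => by
      simp only [Pi.smul_apply, smul_eq_mul, Finset.mul_sum]
      exact Finset.sum_congr rfl fun i _ => by ring)

/-- The map `Z ↦ (X ↦ Z∧X + B(Z,X)·id)`. -/
def proMap (B : LinearMap.BilinForm ℝ V) (Z : V) : V →ₗ[ℝ] Module.End ℝ V where
  toFun X := wedge B Z X + B Z X • (1 : Module.End ℝ V)
  map_add' X X' := by
    ext w
    simp [wedge, map_add, add_smul, smul_add]
    abel
  map_smul' c X := by
    ext w
    simp [wedge, map_smul, smul_smul, smul_sub, smul_add]
    ring_nf

/-!
An element `φ` of `co(B)^{(1)}` has a scale function `c` for which every `φ x - c x • 1` is skew.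
Permuting the arguments as for the Levi-Civita connection gives the Koszul formula
`B (φ x y) z = c x * B y z + c y * B x z - c z * B x y`, so `c` determines `φ`. The case `c = 0`
shows that `so(B)^{(1)} = 0`. For `co(B)`, the formula at `x = y = e` with `B e e ≠ 0` shows that
`c = B Z` for some `Z`, without any appeal to duality and so in arbitrary dimension; since
`proMap B Z` has the same scale function, it equals `φ`.
-/

section Prolongation

/-- The map `φ` takes values in `co(B)`, with `c x` the coefficient of `id` in `φ x`, and satisfies
the symmetry condition of the first prolongation. Linearity of `φ` is not part of the notion. -/
structure HasScale (B : LinearMap.BilinForm ℝ V) (φ : V → Module.End ℝ V) (c : V → ℝ) : Prop where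
  sub_smul_one_mem_soSet : ∀ x, φ x - c x • 1 ∈ soSet B
  apply_comm : ∀ x y, φ x y = φ y x

variable {B : LinearMap.BilinForm ℝ V} {φ ψ : V → Module.End ℝ V} {c d : V → ℝ}

theorem HasScale.apply_add_apply (hφ : HasScale B φ c) (x y z : V) :
    B (φ x y) z + B y (φ x z) = 2 * c x * B y z := by
  have hskew := hφ.sub_smul_one_mem_soSet x y z
  simp only [LinearMap.sub_apply, LinearMap.smul_apply, Module.End.one_apply, map_sub, map_smul,
    smul_eq_mul] at hskew
  linarith

theorem HasScale.sub_mul_apply_eq_zero (hc : HasScale B φ c) (hd : HasScale B φ d) (x y z : V) :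
    (c x - d x) * B y z = 0 := by
  have hcx := hc.apply_add_apply x y z
  have hdx := hd.apply_add_apply x y z
  linarith

theorem HasScale.koszul_formula (hB : B.IsSymm) (hφ : HasScale B φ c) (x y z : V) :
    B (φ x y) z = c x * B y z + c y * B x z - c z * B x y := by
  have hx := hφ.apply_add_apply x y z
  have hy := hφ.apply_add_apply y x z
  have hz := hφ.apply_add_apply z x y
  rw [hB.eq y, hφ.apply_comm x z] at hx
  rw [hB.eq x, hφ.apply_comm y x, hφ.apply_comm y z] at hy
  rw [hB.eq x] at hz
  linarith

theorem HasScale.eq (hB : B.IsSymm) (hsep : B.SeparatingLeft) (hφ : HasScale B φ c)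
    (hψ : HasScale B ψ c) : φ = ψ := by
  refine funext fun x => LinearMap.ext fun y => sub_eq_zero.1 (hsep _ fun z => ?_)
  rw [map_sub, LinearMap.sub_apply, hφ.koszul_formula hB, hψ.koszul_formula hB, sub_self]

theorem HasScale.exists_eq_apply (hB : B.IsSymm) {e : V} (he : B e e ≠ 0) (hφ : HasScale B φ c) :
    ∃ Z, c = B Z := by
  -- `Z` is read off from `B (φ e e) x = 2 * c e * B e x - c x * B e e`, solved for `c x`.
  refine ⟨(B e e)⁻¹ • ((2 * c e) • e - φ e e), funext fun x => ?_⟩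
  have hkoszul := hφ.koszul_formula hB e e x
  simp only [map_sub, map_smul, LinearMap.sub_apply, LinearMap.smul_apply, smul_eq_mul]
  field_simp
  linarith

theorem mem_firstProlong_soSet_iff {φ : V →ₗ[ℝ] Module.End ℝ V} :
    φ ∈ firstProlong (soSet B) ↔ HasScale B φ 0 :=
  ⟨fun h => ⟨fun x => by simpa using h.1 x, h.2⟩,
    fun h => ⟨fun x => by simpa using h.sub_smul_one_mem_soSet x, h.apply_comm⟩⟩

theorem mem_coSet_iff {F : Module.End ℝ V} : F ∈ coSet B ↔ ∃ a : ℝ, F - a • 1 ∈ soSet B := by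
  refine exists_congr fun a => ⟨?_, fun hF => ⟨_, hF, (add_sub_cancel _ _).symm⟩⟩
  rintro ⟨S, hS, rfl⟩
  rwa [add_sub_cancel_left]

theorem mem_firstProlong_coSet_iff {φ : V →ₗ[ℝ] Module.End ℝ V} :
    φ ∈ firstProlong (coSet B) ↔ ∃ c, HasScale B φ c := by
  constructor
  · rintro ⟨hφ, hcomm⟩
    choose c hc using fun x => mem_coSet_iff.1 (hφ x)
    exact ⟨c, hc, hcomm⟩
  · rintro ⟨c, hc, hcomm⟩
    exact ⟨fun x => mem_coSet_iff.2 ⟨c x, hc x⟩, hcomm⟩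

theorem wedge_mem_soSet (hB : B.IsSymm) (X Y : V) : wedge B X Y ∈ soSet B := by
  intro x y
  change B (B X x • Y - B Y x • X) y + B x (B X y • Y - B Y y • X) = 0
  simp only [map_sub, map_smul, LinearMap.sub_apply, LinearMap.smul_apply, smul_eq_mul,
    hB.eq x X, hB.eq x Y]
  ring

theorem proMap_apply_apply (Z X Y : V) :
    proMap B Z X Y = B Z Y • X - B X Y • Z + B Z X • Y :=
  rfl

theorem hasScale_proMap (hB : B.IsSymm) (Z : V) : HasScale B (proMap B Z) (B Z) where
  sub_smul_one_mem_soSet X := by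
    have hwedge : proMap B Z X - B Z X • 1 = wedge B Z X := add_sub_cancel_right _ _
    exact hwedge ▸ wedge_mem_soSet hB Z X
  apply_comm X Y := by
    rw [proMap_apply_apply, proMap_apply_apply, hB.eq X Y]
    abel

theorem exists_apply_self_ne_zero [Nontrivial V] (hB : B.IsSymm) (hsep : B.SeparatingLeft) :
    ∃ e, B e e ≠ 0 :=
  LinearMap.BilinForm.exists_bilinForm_self_ne_zero hsep.ne_zero
    (LinearMap.BilinForm.isSymm_iff.1 hB)

theorem firstProlong_soSet (hB : B.IsSymm) (hsep : B.SeparatingLeft) :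
    firstProlong (soSet B) = {0} := by
  have hzero : 0 ∈ firstProlong (soSet B) := ⟨fun _ _ _ => by simp, fun _ _ => rfl⟩
  refine Set.eq_singleton_iff_unique_mem.2 ⟨hzero, fun φ hφ => DFunLike.coe_injective ?_⟩
  exact (mem_firstProlong_soSet_iff.1 hφ).eq hB hsep (mem_firstProlong_soSet_iff.1 hzero)

theorem firstProlong_coSet (hB : B.IsSymm) (hsep : B.SeparatingLeft) :
    firstProlong (coSet B) = Set.range (proMap B) := by
  refine Set.Subset.antisymm (fun φ hφ => ?_) (Set.range_subset_iff.2 fun Z =>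
    mem_firstProlong_coSet_iff.2 ⟨B Z, hasScale_proMap hB Z⟩)
  cases subsingleton_or_nontrivial V
  · exact ⟨0, Subsingleton.elim _ _⟩
  obtain ⟨e, he⟩ := exists_apply_self_ne_zero hB hsep
  obtain ⟨c, hc⟩ := mem_firstProlong_coSet_iff.1 hφ
  obtain ⟨Z, rfl⟩ := hc.exists_eq_apply hB he
  exact ⟨Z, DFunLike.coe_injective ((hasScale_proMap hB Z).eq hB hsep hc)⟩

theorem proMap_add (Z Z' : V) : proMap B (Z + Z') = proMap B Z + proMap B Z' := by
  ext X Y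
  simp only [LinearMap.add_apply, proMap_apply_apply, map_add, add_smul, smul_add]
  abel

theorem proMap_smul (a : ℝ) (Z : V) : proMap B (a • Z) = a • proMap B Z := by
  ext X Y
  simp only [LinearMap.smul_apply, proMap_apply_apply, map_smul, smul_eq_mul]
  module

theorem proMap_injective (hB : B.IsSymm) (hsep : B.SeparatingLeft) :
    Function.Injective (proMap B) := by
  intro Z Z' h
  refine sub_eq_zero.1 (hsep _ fun X => ?_)
  have hscale := (hasScale_proMap hB Z).sub_mul_apply_eq_zero (h ▸ hasScale_proMap hB Z') X
    (Z - Z') X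
  rw [← LinearMap.sub_apply, ← map_sub] at hscale
  exact mul_self_eq_zero.1 hscale

theorem prolongation_of_so_and_co_general (hB : B.IsSymm) (hsep : B.SeparatingLeft) :
    firstProlong (soSet B) = {0} ∧
    firstProlong (coSet B) = Set.range (proMap B) ∧
    Function.Injective (proMap B) ∧
    (∀ Z Z' : V, proMap B (Z + Z') = proMap B Z + proMap B Z') ∧
    (∀ (c : ℝ) (Z : V), proMap B (c • Z) = c • proMap B Z) :=
  ⟨firstProlong_soSet hB hsep, firstProlong_coSet hB hsep, proMap_injective hB hsep,
    proMap_add, proMap_smul⟩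

end Prolongation

theorem psForm_apply (r s : ℕ) (x y : Fin (r + s) → ℝ) :
    psForm r s x y = ∑ i : Fin (r + s), (if (i : ℕ) < r then (-1 : ℝ) else 1) * (x i * y i) :=
  rfl

theorem psForm_isSymm (r s : ℕ) : (psForm r s).IsSymm :=
  ⟨fun x y => by simp only [psForm_apply, mul_comm (x _)]⟩

theorem psForm_apply_single_one (r s : ℕ) (x : Fin (r + s) → ℝ) (i : Fin (r + s)) :
    psForm r s x (Pi.single i 1) = (if (i : ℕ) < r then (-1 : ℝ) else 1) * x i := by
  simp [psForm_apply, Pi.single_apply]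

theorem psForm_separatingLeft (r s : ℕ) : (psForm r s).SeparatingLeft := by
  intro x hx
  funext i
  have hi := hx (Pi.single i 1)
  rw [psForm_apply_single_one] at hi
  split_ifs at hi <;> simpa using hi

/-- For `r + s ≥ 1`: the first prolongation of `so(r,s)` is zero; the first
prolongation of `co(r,s)` is `{Z∧(·) + (Z,·)·id : Z ∈ ℝ^{r,s}}`; and the map
`Z ↦ (X ↦ Z∧X + (Z,X)·id)` is an injective linear map, so `co(r,s)^{(1)} ≅ ℝ^{r,s}`
as a vector space. -/
theorem prolongation_of_so_and_co (r s : ℕ) (hrs : 1 ≤ r + s) :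
    firstProlong (soSet (psForm r s)) = {0} ∧
    firstProlong (coSet (psForm r s)) = Set.range (proMap (psForm r s)) ∧
    Function.Injective (proMap (psForm r s)) ∧
    (∀ Z Z' : Fin (r + s) → ℝ,
      proMap (psForm r s) (Z + Z') = proMap (psForm r s) Z + proMap (psForm r s) Z') ∧
    (∀ (c : ℝ) (Z : Fin (r + s) → ℝ),
      proMap (psForm r s) (c • Z) = c • proMap (psForm r s) Z) := by
  exact prolongation_of_so_and_co_general (psForm_isSymm r s) (psForm_separatingLeft r s)

end Weyl
end
end

section
/- Let V be a pseudo-Euclidean space with an orthogonal decomposition V = V₁ ⊕ V₂ ⊕ V₃ into three nonzero nondegenerate subspaces. Then ℛ(so(V₁) ⊕ so(V₂) ⊕ so(V₃) ⊕ ℝ·id_V) = ℛ(so(V₁)) ⊕ ℛ(so(V₂)) ⊕ ℛ(so(V₃)) (each summand extended by zero on bivectors involving the other subspaces); in particular, for arbitrary subalgebras 𝔥ᵢ ⊆ so(Vᵢ), i = 1,2,3, the algebra 𝔥₁ ⊕ 𝔥₂ ⊕ 𝔥₃ ⊕ ℝ·id_V ⊆ co(V) is not a Berger algebra. -/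
open Module

noncomputable section

namespace Weyl

variable {V : Type*} [AddCommGroup V] [Module ℝ V]

/-- `so(W)` regarded as a subalgebra of `so(V)`: skew-symmetric endomorphisms
preserving `W` and acting by zero on the complementary summand `W'`. -/
def soPart (B : LinearMap.BilinForm ℝ V) (W W' : Submodule ℝ V) :
    Set (Module.End ℝ V) :=
  {A | A ∈ soSet B ∧ (∀ x ∈ W, A x ∈ W) ∧ ∀ y ∈ W', A y = 0}

/-! Let `R` be a curvature tensor with values in `co(V)` preserving each `Wᵢ`. If `z` lies in a
block containing neither `x` nor `y`, the Bianchi identity puts `R(x,y)z` both in that block and in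
the sum of the blocks of `x` and `y`, so it vanishes. As there are at least three blocks, `R(x,y)`
therefore kills a nonzero nondegenerate block whenever `x` and `y` each lie in a block, and this
forces its homothety part to vanish. For `x ∈ Wᵢ` and `j ≠ i`, the map `y ↦ R(x,y)|_{Wⱼ}` on `Wⱼ` is
then in the first prolongation of `so(Wⱼ)`, which is zero. Hence `R(Wᵢ,Wⱼ) = 0`, and `R` is the sum
of its restrictions to the blocks. -/

theorem eq_zero_of_symm_of_antisymm {α G : Type*} [AddCommGroup G] [IsAddTorsionFree G]
    {T : α → α → α → G} (hsymm : ∀ x y z, T x y z = T y x z)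
    (hanti : ∀ x y z, T x y z = -T x z y) (x y z : α) : T x y z = 0 := by
  refine self_eq_neg.1 ?_
  calc
    T x y z = -T y z x := by rw [hsymm, hanti]
    _ = T z x y := by rw [hsymm, hanti, neg_neg]
    _ = -T x y z := by rw [hsymm, hanti]

theorem linearMap_ext_of_iSup_eq_top {ι R M N : Type*} [Semiring R] [AddCommMonoid M]
    [AddCommMonoid N] [Module R M] [Module R N] {W : ι → Submodule R M} (hsup : ⨆ i, W i = ⊤)
    {f g : M →ₗ[R] N} (h : ∀ i, ∀ x ∈ W i, f x = g x) : f = g :=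
  LinearMap.eqLocus_eq_top.1 <| top_le_iff.1 <| hsup ▸ iSup_le h

theorem le_iSup_ne {ι α : Type*} [CompleteLattice α] (W : ι → α) {i j : ι} (hji : j ≠ i) :
    W j ≤ ⨆ k ≠ i, W k :=
  le_iSup₂_of_le j hji le_rfl

theorem isCompl_iSup_ne {ι α : Type*} [CompleteLattice α] {W : ι → α} (hind : iSupIndep W)
    (hsup : ⨆ i, W i = ⊤) (i : ι) : IsCompl (W i) (⨆ j ≠ i, W j) :=
  ⟨hind i, codisjoint_iff.2 <| by rw [← iSup_split_single, hsup]⟩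

theorem disjoint_sup_of_ne {ι α : Type*} [CompleteLattice α] {W : ι → α}
    (hind : iSupIndep W) {i j k : ι} (hki : k ≠ i) (hkj : k ≠ j) :
    Disjoint (W k) (W i ⊔ W j) :=
  (hind k).mono_right <| sup_le (le_iSup_ne W hki.symm) (le_iSup_ne W hkj.symm)

theorem eq_sum_compl₁₂_projection {ι R M N : Type*} [Fintype ι] [CommRing R] [AddCommGroup M]
    [AddCommGroup N] [Module R M] [Module R N] {W : ι → Submodule R M} (hind : iSupIndep W)
    (hsup : ⨆ i, W i = ⊤) {f : M →ₗ[R] M →ₗ[R] N}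
    (hf : ∀ i j, i ≠ j → ∀ x ∈ W i, ∀ y ∈ W j, f x y = 0) :
    f = ∑ i, f.compl₁₂ ((W i).projection _ (isCompl_iSup_ne hind hsup i))
      ((W i).projection _ (isCompl_iSup_ne hind hsup i)) := by
  set P := fun i => (W i).projection _ (isCompl_iSup_ne hind hsup i)
  have hP : ∀ i, ∀ x ∈ W i, P i x = x := fun i _ hx => Submodule.projection_apply_of_mem_left _ hx
  have hP' : ∀ i j, j ≠ i → ∀ x ∈ W j, P i x = 0 := fun i j hji x hx =>
    Submodule.projection_apply_of_mem_right _ (le_iSup_ne W hji hx)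
  refine linearMap_ext_of_iSup_eq_top hsup fun i x hx =>
    linearMap_ext_of_iSup_eq_top hsup fun j y hy => ?_
  have hsingle : (∑ k, f.compl₁₂ (P k) (P k)) x y = f x (P i y) := by
    simp only [LinearMap.sum_apply, LinearMap.compl₁₂_apply]
    rw [Finset.sum_eq_single i (fun k _ hki => by rw [hP' k i hki.symm x hx]; simp) (by simp),
      hP i x hx]
  rw [hsingle]
  rcases eq_or_ne i j with rfl | hij
  · rw [hP i y hy]
  · rw [hP' i j hij.symm y hy, map_zero, hf i j hij x hx y hy]

section Conformal

variable {B : LinearMap.BilinForm ℝ V} {W : Submodule ℝ V} {F : Module.End ℝ V}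

theorem soSet_eq_skewAdjointSubmodule (B : LinearMap.BilinForm ℝ V) :
    soSet B = (LinearMap.skewAdjointSubmodule B : Set (Module.End ℝ V)) := by
  ext A
  simp [soSet, LinearMap.IsSkewAdjoint, LinearMap.IsAdjointPair, eq_neg_iff_add_eq_zero]

theorem mem_soSet_of_mem_coSet_of_eqOn_zero (hW : W ≠ ⊥) (hnd : IsNondegOn B W)
    (hF : F ∈ coSet B) (hzero : ∀ z ∈ W, F z = 0) : F ∈ soSet B := by
  obtain ⟨c, S, hS, rfl⟩ := hF
  obtain ⟨z, hz, hz0⟩ := W.ne_bot_iff.1 hW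
  obtain ⟨w, hw, hzw⟩ : ∃ w ∈ W, B z w ≠ 0 := by
    by_contra! h
    exact hz0 (hnd z hz h)
  have hSz : S z = -(c • z) := eq_neg_of_add_eq_zero_right (hzero z hz)
  have hSw : S w = -(c • w) := eq_neg_of_add_eq_zero_right (hzero w hw)
  have hsum : -(c * B z w) + -(c * B z w) = 0 := by simpa [hSz, hSw] using hS z w
  have hc : c = 0 := (mul_eq_zero.1 (by linarith)).resolve_right hzw
  simpa [hc] using hS

theorem one_notMem_soSet (hB : B ≠ 0) : (1 : Module.End ℝ V) ∉ soSet B := fun h =>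
  hB <| LinearMap.ext₂ fun x y => self_eq_neg.1 <| eq_neg_of_add_eq_zero_left (h x y)

theorem ne_zero_of_isNondegOn (hW : W ≠ ⊥) (hnd : IsNondegOn B W) : B ≠ 0 := by
  rintro rfl
  exact hW <| W.eq_bot_iff.2 fun x hx => hnd x hx fun _ _ => rfl

end Conformal

namespace IsCurv

variable {B : LinearMap.BilinForm ℝ V} {g : Set (Module.End ℝ V)}
  {R : V →ₗ[ℝ] V →ₗ[ℝ] Module.End ℝ V} {U U' W W' : Submodule ℝ V} {x y z : V}

theorem apply_apply_eq_zero_of_disjoint (hR : IsCurv g R) (hU : Invariant g U)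
    (hU' : Invariant g U') (hW : Invariant g W) (hdisj : Disjoint W (U ⊔ U'))
    (hx : x ∈ U) (hy : y ∈ U') (hz : z ∈ W) : R x y z = 0 := by
  obtain ⟨-, hmem, hbianchi⟩ := hR
  have hsum : R y z x + R z x y ∈ U ⊔ U' :=
    Submodule.add_mem_sup (hU _ (hmem y z) x hx) (hU' _ (hmem z x) y hy)
  refine Submodule.disjoint_def.1 hdisj _ (hW _ (hmem x y) z hz) ?_
  rw [eq_neg_of_add_eq_zero_left ((add_assoc _ _ _).symm.trans (hbianchi x y z))]
  exact neg_mem hsum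

theorem apply_apply_comm (hR : IsCurv g R) (hU : Invariant g U) (hW : Invariant g W)
    (hdisj : Disjoint U W) (hx : x ∈ U) (hy : y ∈ W) (hz : z ∈ W) : R x y z = R x z y := by
  have hyz : R y z x = 0 :=
    hR.apply_apply_eq_zero_of_disjoint hW hW hU (by rwa [sup_idem]) hy hz hx
  have hbianchi := hR.2.2 x y z
  rwa [hyz, add_zero, hR.1 z x, LinearMap.neg_apply, add_neg_eq_zero] at hbianchi

/-- The restrictions to `W` of the maps `R x y`, `y ∈ W`, define an element of the first
prolongation of `so(W)`, which is zero. -/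
theorem apply_apply_eq_zero_of_mem_soSet (hB : B.IsSymm) (hR : IsCurv g R)
    (hU : Invariant g U) (hW : Invariant g W) (hdisj : Disjoint U W) (hnd : IsNondegOn B W)
    (hx : x ∈ U) (hso : ∀ y ∈ W, R x y ∈ soSet B) (hy : y ∈ W) (hz : z ∈ W) :
    R x y z = 0 := by
  have hT : ∀ a b c : W, B (R x a b) c = 0 :=
    eq_zero_of_symm_of_antisymm
      (fun a b c => by rw [hR.apply_apply_comm hU hW hdisj hx a.2 b.2])
      (fun a b c => by
        rw [hB.eq (R x a c)]
        exact eq_neg_of_add_eq_zero_left (hso a a.2 b c))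
  exact hnd _ (hW _ (hR.2.1 x y) z hz) fun w hw => hT ⟨y, hy⟩ ⟨z, hz⟩ ⟨w, hw⟩

theorem compl₁₂_projection (hR : IsCurv g R) (hWW' : IsCompl W W')
    (hso : ∀ x ∈ W, ∀ y ∈ W, R x y ∈ soPart B W W') :
    IsCurv (soPart B W W') (R.compl₁₂ (W.projection W' hWW') (W.projection W' hWW')) := by
  set P := W.projection W' hWW'
  have hP : ∀ x, P x ∈ W := Submodule.projection_apply_mem hWW'
  have happly : ∀ x y z, R (P x) (P y) z = R (P x) (P y) (P z) := fun x y z => by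
    have hz : z - P z ∈ W' := by
      rw [← Submodule.projection_apply_eq_zero_iff hWW', map_sub, sub_eq_zero]
      exact (Submodule.projection_apply_of_mem_left hWW' (hP z)).symm
    rw [← sub_eq_zero, ← map_sub]
    exact (hso _ (hP x) _ (hP y)).2.2 _ hz
  refine ⟨fun x y => hR.1 _ _, fun x y => hso _ (hP x) _ (hP y), fun x y z => ?_⟩
  simp only [LinearMap.compl₁₂_apply]
  rw [happly x y z, happly y z x, happly z x y]
  exact hR.2.2 _ _ _

end IsCurv

section Family

variable {ι : Type*} {B : LinearMap.BilinForm ℝ V} {W : ι → Submodule ℝ V}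
  {g : Set (Module.End ℝ V)} {R : V →ₗ[ℝ] V →ₗ[ℝ] Module.End ℝ V}

/-- The subalgebra `so(Wᵢ)` attached to a member of a family of subspaces of `V`, acting by zero on
the other members. -/
def soBlock (B : LinearMap.BilinForm ℝ V) (W : ι → Submodule ℝ V) (i : ι) :
    Set (Module.End ℝ V) :=
  soPart B (W i) (⨆ j ≠ i, W j)

/-- `R` lies in `ℛ(so(Wᵢ))`, where tensors on `Wᵢ` are regarded as tensors on `V` by extending
them by zero on bivectors involving the other members of the family. -/
def IsBlockCurv (B : LinearMap.BilinForm ℝ V) (W : ι → Submodule ℝ V) (i : ι)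
    (R : V →ₗ[ℝ] V →ₗ[ℝ] Module.End ℝ V) : Prop :=
  IsCurv (soBlock B W i) R ∧ ∀ x y : V, x ∈ ⨆ j ≠ i, W j ∨ y ∈ ⨆ j ≠ i, W j → R x y = 0

namespace IsCurv

theorem apply_apply_eq_zero_of_ne (hR : IsCurv g R) (hind : iSupIndep W)
    (hinv : ∀ i, Invariant g (W i)) {i j k : ι} (hki : k ≠ i) (hkj : k ≠ j) {x y z : V}
    (hx : x ∈ W i) (hy : y ∈ W j) (hz : z ∈ W k) : R x y z = 0 :=
  hR.apply_apply_eq_zero_of_disjoint (hinv i) (hinv j) (hinv k)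
    (disjoint_sup_of_ne hind hki hkj) hx hy hz

theorem apply_mem_soSet (hR : IsCurv g R) (hι : 3 ≤ ENat.card ι) (hind : iSupIndep W)
    (hne : ∀ i, W i ≠ ⊥) (hnd : ∀ i, IsNondegOn B (W i)) (hg : g ⊆ coSet B)
    (hinv : ∀ i, Invariant g (W i)) {i j : ι} {x y : V} (hx : x ∈ W i) (hy : y ∈ W j) :
    R x y ∈ soSet B := by
  obtain ⟨k, hki, hkj⟩ := ENat.exists_ne_ne_of_three_le hι i j
  exact mem_soSet_of_mem_coSet_of_eqOn_zero (hne k) (hnd k) (hg (hR.2.1 x y)) fun _ hz =>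
    hR.apply_apply_eq_zero_of_ne hind hinv hki hkj hx hy hz

theorem apply_eq_zero_of_ne (hR : IsCurv g R) (hι : 3 ≤ ENat.card ι) (hB : B.IsSymm)
    (hind : iSupIndep W) (hsup : ⨆ i, W i = ⊤) (hne : ∀ i, W i ≠ ⊥)
    (hnd : ∀ i, IsNondegOn B (W i)) (hg : g ⊆ coSet B) (hinv : ∀ i, Invariant g (W i))
    {i j : ι} (hij : i ≠ j) {x y : V} (hx : x ∈ W i) (hy : y ∈ W j) : R x y = 0 := by
  have hmixed {i j : ι} (hij : i ≠ j) {x y z : V} (hx : x ∈ W i) (hy : y ∈ W j)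
      (hz : z ∈ W j) : R x y z = 0 :=
    hR.apply_apply_eq_zero_of_mem_soSet hB (hinv i) (hinv j) (hind.pairwiseDisjoint hij) (hnd j)
      hx (fun _ hy => hR.apply_mem_soSet hι hind hne hnd hg hinv hx hy) hy hz
  refine linearMap_ext_of_iSup_eq_top hsup fun k z hz => ?_
  rcases eq_or_ne k j with rfl | hkj
  · exact hmixed hij hx hy hz
  rcases eq_or_ne k i with rfl | hki
  · rw [hR.1, LinearMap.neg_apply, hmixed hij.symm hy hx hz, neg_zero, LinearMap.zero_apply]
  · exact hR.apply_apply_eq_zero_of_ne hind hinv hki hkj hx hy hz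

theorem apply_mem_soBlock (hR : IsCurv g R) (hι : 3 ≤ ENat.card ι) (hind : iSupIndep W)
    (hne : ∀ i, W i ≠ ⊥) (hnd : ∀ i, IsNondegOn B (W i)) (hg : g ⊆ coSet B)
    (hinv : ∀ i, Invariant g (W i)) {i : ι} {x y : V} (hx : x ∈ W i) (hy : y ∈ W i) :
    R x y ∈ soBlock B W i := by
  have hker : ⨆ j ≠ i, W j ≤ LinearMap.ker (R x y) :=
    iSup₂_le fun _ hji _ hz => hR.apply_apply_eq_zero_of_ne hind hinv hji hji hx hy hz
  exact ⟨hR.apply_mem_soSet hι hind hne hnd hg hinv hx hy, hinv i _ (hR.2.1 x y), hker⟩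

theorem apply_mem_soSet_of_iSup_eq_top (hR : IsCurv g R) (hι : 3 ≤ ENat.card ι)
    (hind : iSupIndep W) (hsup : ⨆ i, W i = ⊤) (hne : ∀ i, W i ≠ ⊥)
    (hnd : ∀ i, IsNondegOn B (W i)) (hg : g ⊆ coSet B) (hinv : ∀ i, Invariant g (W i)) (x y : V) :
    R x y ∈ soSet B := by
  have hle : Submodule.map₂ R ⊤ ⊤ ≤ LinearMap.skewAdjointSubmodule B := by
    simp only [← hsup, Submodule.map₂_iSup_left, Submodule.map₂_iSup_right]
    refine iSup₂_le fun i j => Submodule.map₂_le.2 fun x hx y hy => ?_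
    rw [← SetLike.mem_coe, ← soSet_eq_skewAdjointSubmodule]
    exact hR.apply_mem_soSet hι hind hne hnd hg hinv hx hy
  rw [soSet_eq_skewAdjointSubmodule]
  exact hle (Submodule.apply_mem_map₂ R trivial trivial)

theorem exists_eq_sum_isBlockCurv [Fintype ι] (hR : IsCurv g R) (hι : 3 ≤ ENat.card ι)
    (hB : B.IsSymm) (hind : iSupIndep W) (hsup : ⨆ i, W i = ⊤) (hne : ∀ i, W i ≠ ⊥)
    (hnd : ∀ i, IsNondegOn B (W i)) (hg : g ⊆ coSet B) (hinv : ∀ i, Invariant g (W i)) :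
    ∃ S : ι → V →ₗ[ℝ] V →ₗ[ℝ] Module.End ℝ V,
      (∀ i, IsBlockCurv B W i (S i)) ∧ R = ∑ i, S i := by
  refine ⟨_, fun i => ⟨?_, ?_⟩, eq_sum_compl₁₂_projection hind hsup fun i j hij x hx y hy =>
    hR.apply_eq_zero_of_ne hι hB hind hsup hne hnd hg hinv hij hx hy⟩
  · exact hR.compl₁₂_projection _ fun x hx y hy =>
      hR.apply_mem_soBlock hι hind hne hnd hg hinv hx hy
  · rintro x y (hx | hy)
    · simp [Submodule.projection_apply_of_mem_right _ hx]
    · simp [Submodule.projection_apply_of_mem_right _ hy]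

end IsCurv

theorem not_isBerger_of_one_mem (hι : 3 ≤ ENat.card ι) (hind : iSupIndep W)
    (hsup : ⨆ i, W i = ⊤) (hne : ∀ i, W i ≠ ⊥) (hnd : ∀ i, IsNondegOn B (W i))
    (hg : g ⊆ coSet B) (hinv : ∀ i, Invariant g (W i)) (hone : 1 ∈ g) : ¬ IsBerger g := by
  intro hberger
  have hspan : curvSpan g ≤ LinearMap.skewAdjointSubmodule B := by
    rw [curvSpan, Submodule.span_le, ← soSet_eq_skewAdjointSubmodule]
    rintro _ ⟨R, hR, x, y, rfl⟩
    exact hR.apply_mem_soSet_of_iSup_eq_top hι hind hsup hne hnd hg hinv x y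
  obtain ⟨i⟩ : Nonempty ι := by
    by_contra! hempty
    simp [ENat.card_eq_zero_iff_empty ι |>.2 hempty] at hι
  refine one_notMem_soSet (ne_zero_of_isNondegOn (hne i) (hnd i)) ?_
  rw [← hberger] at hone
  rw [soSet_eq_skewAdjointSubmodule]
  exact hspan hone

end Family

section HomothetySum

variable {ι : Type*} [Fintype ι] {B : LinearMap.BilinForm ℝ V} {W : ι → Submodule ℝ V}
  {h h' : ι → Set (Module.End ℝ V)}

/-- The sum `ℝ·id_V ⊕ ⨁ᵢ 𝔥ᵢ` of the homotheties and a finite family of sets of endomorphisms. -/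
def homothetySum (h : ι → Set (Module.End ℝ V)) : Set (Module.End ℝ V) :=
  {F | ∃ c : ℝ, ∃ A : ι → Module.End ℝ V, (∀ i, A i ∈ h i) ∧
    F = c • (1 : Module.End ℝ V) + ∑ i, A i}

theorem homothetySum_mono (hh : ∀ i, h i ⊆ h' i) : homothetySum h ⊆ homothetySum h' := by
  rintro _ ⟨c, A, hA, rfl⟩
  exact ⟨c, A, fun i => hh i (hA i), rfl⟩

theorem one_mem_homothetySum (hzero : ∀ i, 0 ∈ h i) : 1 ∈ homothetySum h :=
  ⟨1, 0, hzero, by simp⟩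

theorem homothetySum_subset_coSet (hh : ∀ i, h i ⊆ soSet B) : homothetySum h ⊆ coSet B := by
  rintro _ ⟨c, A, hA, rfl⟩
  refine ⟨c, ∑ i, A i, ?_, rfl⟩
  simp only [soSet_eq_skewAdjointSubmodule] at hh ⊢
  exact sum_mem fun i _ => hh i (hA i)

theorem invariant_homothetySum {U : Submodule ℝ V} (hinv : ∀ i, Invariant (h i) U) :
    Invariant (homothetySum h) U := by
  rintro _ ⟨c, A, hA, rfl⟩ x hx
  simp only [LinearMap.add_apply, LinearMap.smul_apply, Module.End.one_apply,
    LinearMap.sum_apply]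
  exact add_mem (U.smul_mem c hx) (sum_mem fun i _ => hinv i _ (hA i) x hx)

theorem homothetySum_soBlock_subset_coSet : homothetySum (soBlock B W) ⊆ coSet B :=
  homothetySum_subset_coSet fun _ _ hA => hA.1

theorem invariant_homothetySum_soBlock (i : ι) : Invariant (homothetySum (soBlock B W)) (W i) := by
  refine invariant_homothetySum fun j A hA x hx => ?_
  rcases eq_or_ne i j with rfl | hij
  · exact hA.2.1 x hx
  · rw [hA.2.2 x (le_iSup_ne W hij hx)]
    exact zero_mem _

theorem IsCurv.sum {S : ι → V →ₗ[ℝ] V →ₗ[ℝ] Module.End ℝ V} (hS : ∀ i, IsCurv (h i) (S i)) :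
    IsCurv (homothetySum h) (∑ i, S i) := by
  simp only [IsCurv, LinearMap.sum_apply]
  refine ⟨fun x y => ?_, fun x y => ⟨0, fun i => S i x y, fun i => (hS i).2.1 x y, by simp⟩,
    fun x y z => ?_⟩
  · rw [← Finset.sum_neg_distrib]
    exact Finset.sum_congr rfl fun i _ => (hS i).1 x y
  · rw [← Finset.sum_add_distrib, ← Finset.sum_add_distrib]
    exact Finset.sum_eq_zero fun i _ => (hS i).2.2 x y z

theorem conformal_triple_sum_curvature_general (hι : 3 ≤ ENat.card ι) (hB : B.IsSymm)
    (hind : iSupIndep W) (hsup : ⨆ i, W i = ⊤) (hne : ∀ i, W i ≠ ⊥)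
    (hnd : ∀ i, IsNondegOn B (W i)) :
    (∀ R : V →ₗ[ℝ] V →ₗ[ℝ] Module.End ℝ V,
      IsCurv (homothetySum (soBlock B W)) R ↔
        ∃ S : ι → V →ₗ[ℝ] V →ₗ[ℝ] Module.End ℝ V,
          (∀ i, IsBlockCurv B W i (S i)) ∧ R = ∑ i, S i) ∧
    ∀ h : ι → Set (Module.End ℝ V), (∀ i, 0 ∈ h i) → (∀ i, h i ⊆ soBlock B W i) →
      ¬ IsBerger (homothetySum h) := by
  refine ⟨fun R => ⟨fun hR => ?_, ?_⟩, fun h hzero hh => ?_⟩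
  · exact hR.exists_eq_sum_isBlockCurv hι hB hind hsup hne hnd
      homothetySum_soBlock_subset_coSet invariant_homothetySum_soBlock
  · rintro ⟨S, hS, rfl⟩
    exact IsCurv.sum fun i => (hS i).1
  · have hsub := homothetySum_mono hh
    exact not_isBerger_of_one_mem hι hind hsup hne hnd
      (hsub.trans homothetySum_soBlock_subset_coSet)
      (fun i F hF => invariant_homothetySum_soBlock i F (hsub hF)) (one_mem_homothetySum hzero)

theorem homothetySum_fin_three (h : Fin 3 → Set (Module.End ℝ V)) :
    homothetySum h = {F | ∃ c : ℝ, ∃ A₁ ∈ h 0, ∃ A₂ ∈ h 1, ∃ A₃ ∈ h 2,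
      F = c • (1 : Module.End ℝ V) + A₁ + A₂ + A₃} := by
  ext F
  simp [homothetySum, Fin.exists_fin_succ_pi, Fin.forall_fin_succ, Fin.sum_univ_three, add_assoc,
    and_assoc]

end HomothetySum

/-- Let `V = V₁ ⊕ V₂ ⊕ V₃` be an orthogonal decomposition of a pseudo-Euclidean
space into three nonzero nondegenerate subspaces.  Then
`ℛ(so(V₁) ⊕ so(V₂) ⊕ so(V₃) ⊕ ℝ·id) = ℛ(so(V₁)) ⊕ ℛ(so(V₂)) ⊕ ℛ(so(V₃))`
(each summand extended by zero); in particular, for arbitrary subalgebras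
`𝔥ᵢ ⊆ so(Vᵢ)`, the algebra `𝔥₁ ⊕ 𝔥₂ ⊕ 𝔥₃ ⊕ ℝ·id` is not a Berger algebra. -/
theorem conformal_triple_sum_curvature
    [FiniteDimensional ℝ V] (B : LinearMap.BilinForm ℝ V)
    (hsymm : ∀ x y, B x y = B y x) (hnd : ∀ x, (∀ y, B x y = 0) → x = 0)
    (V₁ V₂ V₃ : Submodule ℝ V)
    (hV1 : V₁ ≠ ⊥) (hV2 : V₂ ≠ ⊥) (hV3 : V₃ ≠ ⊥)
    (hnd1 : IsNondegOn B V₁) (hnd2 : IsNondegOn B V₂) (hnd3 : IsNondegOn B V₃)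
    (horth12 : ∀ x ∈ V₁, ∀ y ∈ V₂, B x y = 0)
    (horth13 : ∀ x ∈ V₁, ∀ y ∈ V₃, B x y = 0)
    (horth23 : ∀ x ∈ V₂, ∀ y ∈ V₃, B x y = 0)
    (hind1 : V₁ ⊓ (V₂ ⊔ V₃) = ⊥) (hind2 : V₂ ⊓ (V₁ ⊔ V₃) = ⊥)
    (hind3 : V₃ ⊓ (V₁ ⊔ V₂) = ⊥) (hsup : V₁ ⊔ V₂ ⊔ V₃ = ⊤) :
    (∀ R : V →ₗ[ℝ] V →ₗ[ℝ] Module.End ℝ V,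
      IsCurv
          {F | ∃ c : ℝ, ∃ A₁ ∈ soPart B V₁ (V₂ ⊔ V₃), ∃ A₂ ∈ soPart B V₂ (V₁ ⊔ V₃),
            ∃ A₃ ∈ soPart B V₃ (V₁ ⊔ V₂),
            F = c • (1 : Module.End ℝ V) + A₁ + A₂ + A₃} R ↔
        ∃ R₁ R₂ R₃ : V →ₗ[ℝ] V →ₗ[ℝ] Module.End ℝ V,
          IsCurv (soPart B V₁ (V₂ ⊔ V₃)) R₁ ∧
          (∀ x y : V, x ∈ V₂ ⊔ V₃ ∨ y ∈ V₂ ⊔ V₃ → R₁ x y = 0) ∧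
          IsCurv (soPart B V₂ (V₁ ⊔ V₃)) R₂ ∧
          (∀ x y : V, x ∈ V₁ ⊔ V₃ ∨ y ∈ V₁ ⊔ V₃ → R₂ x y = 0) ∧
          IsCurv (soPart B V₃ (V₁ ⊔ V₂)) R₃ ∧
          (∀ x y : V, x ∈ V₁ ⊔ V₂ ∨ y ∈ V₁ ⊔ V₂ → R₃ x y = 0) ∧
          R = R₁ + R₂ + R₃) ∧
    (∀ h₁ h₂ h₃ : Set (Module.End ℝ V),
      IsLieSub h₁ → IsLieSub h₂ → IsLieSub h₃ →
      h₁ ⊆ soPart B V₁ (V₂ ⊔ V₃) → h₂ ⊆ soPart B V₂ (V₁ ⊔ V₃) →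
      h₃ ⊆ soPart B V₃ (V₁ ⊔ V₂) →
      ¬ IsBerger {F | ∃ c : ℝ, ∃ A₁ ∈ h₁, ∃ A₂ ∈ h₂, ∃ A₃ ∈ h₃,
          F = c • (1 : Module.End ℝ V) + A₁ + A₂ + A₃}) := by
  have hind : iSupIndep ![V₁, V₂, V₃] := by
    simp [iSupIndep_fin_three, disjoint_iff, hind1, hind2, hind3, sup_comm V₃ V₁]
  obtain ⟨hcurv, hberger⟩ := conformal_triple_sum_curvature_general (W := ![V₁, V₂, V₃])
    (by simp) ⟨hsymm⟩ hind (by simpa using hsup)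
    (by simp [Fin.forall_fin_succ, hV1, hV2, hV3])
    (by simp [Fin.forall_fin_succ, hnd1, hnd2, hnd3])
  refine ⟨?_, fun h₁ h₂ h₃ hLie₁ hLie₂ hLie₃ hh₁ hh₂ hh₃ => ?_⟩
  · simpa [homothetySum_fin_three, soBlock, IsBlockCurv, Fin.exists_fin_succ_pi,
      Fin.forall_fin_succ, Fin.sum_univ_three, and_assoc] using hcurv
  · simpa [homothetySum_fin_three] using hberger ![h₁, h₂, h₃]
      (by simp [Fin.forall_fin_succ, hLie₁.1, hLie₂.1, hLie₃.1])
      (by simp [Fin.forall_fin_succ, soBlock, hh₁, hh₂, hh₃])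

end Weyl
end
end
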